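/- Theorem (noiseless partial return is not identifiable): Let P_Σr be the noiseless partial return preference model, i.e., P_Σr(σ1 ≻ σ2 | r̃) = 1 if the partial return of σ1 under r̃ strictly exceeds that of σ2, and P_Σr(σ1 ≻ σ2 | r̃) = 0.5 if they are equal. There exists a finite MDP with ground-truth reward r and a second reward function r̂ on the same MDP such that, for a fixed segment length, r and r̂ induce exactly the same noiseless partial-return preference relation over all pairs of segments of that length, yet Π*_{r̂} ≠ Π*_{r}; hence the noiseless partial return preference model is not identifiable. -/

import Mathlib

open scoped BigOperators

/-- The dynamics of a finite MDP: a transition kernel `T` on finite state and action spaces. -/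
structure MDP (S A : Type) [Fintype S] [Fintype A] where
  T : S → A → S → ℝ
  T_nonneg : ∀ s a s', 0 ≤ T s a s'
  T_sum_one : ∀ s a, ∑ s', T s a s' = 1

/-- A (stochastic, memoryless) policy `π : S → Δ(A)`. -/
structure Policy (S A : Type) [Fintype A] where
  p : S → A → ℝ
  nonneg : ∀ s a, 0 ≤ p s a
  sum_one : ∀ s, ∑ a, p s a = 1

variable {S A : Type} [Fintype S] [Fintype A]

/-- Expected reward received at time `t` when starting from state `s` and following `π`. -/
noncomputable def expReward (M : MDP S A) (π : Policy S A) (r : S → A → S → ℝ) :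
    ℕ → S → ℝ
  | 0, s => ∑ a, ∑ s', π.p s a * M.T s a s' * r s a s'
  | t + 1, s => ∑ a, ∑ s', π.p s a * M.T s a s' * expReward M π r t s'

/-- `V^π_{r,γ}`: the expected discounted return of policy `π` from state `s`. -/
noncomputable def Vpi (M : MDP S A) (π : Policy S A) (r : S → A → S → ℝ) (γ : ℝ) (s : S) : ℝ :=
  ∑' t : ℕ, γ ^ t * expReward M π r t s

/-- `Q^π_{r,γ}`: the expected discounted return from `s` taking `a` first, following `π` after. -/
noncomputable def Qpi (M : MDP S A) (π : Policy S A) (r : S → A → S → ℝ) (γ : ℝ)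
    (s : S) (a : A) : ℝ :=
  ∑ s', M.T s a s' * (r s a s' + γ * Vpi M π r γ s')

/-- The optimal state-value function `V*_{r,γ}`. -/
noncomputable def Vstar (M : MDP S A) (r : S → A → S → ℝ) (γ : ℝ) (s : S) : ℝ :=
  ⨆ π : Policy S A, Vpi M π r γ s

/-- The optimal state-action value function `Q*_{r,γ}`. -/
noncomputable def Qstar (M : MDP S A) (r : S → A → S → ℝ) (γ : ℝ) (s : S) (a : A) : ℝ :=
  ⨆ π : Policy S A, Qpi M π r γ s a

/-- `Π*_{(r,γ)}`: the set of optimal policies, those attaining `V*` at every state. -/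
def Pistar (M : MDP S A) (r : S → A → S → ℝ) (γ : ℝ) : Set (Policy S A) :=
  {π | ∀ s, Vpi M π r γ s = Vstar M r γ s}

/-- A segment of length `n`: states `s_0, …, s_n` and actions `a_0, …, a_{n-1}`. -/
abbrev Segment (S A : Type) (n : ℕ) := (Fin (n + 1) → S) × (Fin n → A)

/-- Discounted partial return of a segment: `Σ_{t<n} γ^t r(s_t, a_t, s_{t+1})`. -/
noncomputable def partialReturn {S A : Type} (r : S → A → S → ℝ) (γ : ℝ) {n : ℕ}
    (σ : Segment S A n) : ℝ :=
  ∑ t : Fin n, γ ^ (t : ℕ) * r (σ.1 t.castSucc) (σ.2 t) (σ.1 t.succ)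

/-- Regret of a segment: `Σ_{t<n} γ^t (V*(s_t) − Q*(s_t,a_t))`. -/
noncomputable def segRegret (M : MDP S A) (r : S → A → S → ℝ) (γ : ℝ) {n : ℕ}
    (σ : Segment S A n) : ℝ :=
  ∑ t : Fin n, γ ^ (t : ℕ) *
    (Vstar M r γ (σ.1 t.castSucc) - Qstar M r γ (σ.1 t.castSucc) (σ.2 t))

/-- The logistic function. -/
noncomputable def logistic (x : ℝ) : ℝ := 1 / (1 + Real.exp (-x))

/-!
Preferences over finitely many segments only record the ordering of their partial returns, so along
a line of rewards they are locally constant off finitely many points, whereas a choice between a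
sure payoff and a gamble depends on the exact size of the prize. Pay `1` for the safe action and `w`
for winning the gamble. Partial returns are affine in `w = 1 + x`, hence for small `x > 0` their
ordering is lexicographic (constant term first, then slope) and does not depend on `x`. Given
prizes `w₁ < w₂` in that range, a winning probability strictly between `1 / w₂` and `1 / w₁` makes
gambling worse than playing safe for `w₁` and better for `w₂`. The episode ends after one step, so
values are finite for every discount factor.
-/

section Preferences

open Filter Topology

/-- Two rewards induce the same noiseless partial-return preferences, both strict preference and
indifference, over segments of length `n`. -/
def SamePreferences {S A : Type} (γ : ℝ) (n : ℕ) (r rh : S → A → S → ℝ) : Prop :=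
  ∀ σ τ : Segment S A n,
    (partialReturn r γ σ < partialReturn r γ τ ↔ partialReturn rh γ σ < partialReturn rh γ τ) ∧
    (partialReturn r γ σ = partialReturn r γ τ ↔ partialReturn rh γ σ = partialReturn rh γ τ)

theorem eventually_cmp_add_mul (a b c d : ℝ) :
    ∀ᶠ x in 𝓝[>] (0 : ℝ), cmp (a + x * b) (c + x * d) = (cmp a c).then (cmp b d) := by
  have tendsto_add_mul (a b : ℝ) : Tendsto (fun x => a + x * b) (𝓝[>] 0) (𝓝 a) := by
    have h : Continuous fun x : ℝ => a + x * b := by fun_prop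
    simpa using (h.tendsto 0).mono_left nhdsWithin_le_nhds
  rcases lt_trichotomy a c with hac | rfl | hca
  · filter_upwards [(tendsto_add_mul a b).eventually_lt (tendsto_add_mul c d) hac] with x hx
    rw [hx.cmp_eq_lt, hac.cmp_eq_lt, Ordering.lt_then]
  · filter_upwards [self_mem_nhdsWithin] with x (hx : 0 < x)
    rw [cmp_add_left, cmp_mul_pos_left hx, cmp_self_eq_eq, Ordering.eq_then]
  · filter_upwards [(tendsto_add_mul c d).eventually_lt (tendsto_add_mul a b) hca] with x hx
    rw [hx.cmp_eq_gt, hca.cmp_eq_gt, Ordering.gt_then]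

theorem partialReturn_add_smul {S A : Type} (r d : S → A → S → ℝ) (γ x : ℝ) {n : ℕ}
    (σ : Segment S A n) :
    partialReturn (r + x • d) γ σ = partialReturn r γ σ + x * partialReturn d γ σ := by
  simp only [partialReturn, Pi.add_apply, Pi.smul_apply, smul_eq_mul, Finset.mul_sum,
    ← Finset.sum_add_distrib]
  exact Finset.sum_congr rfl fun t _ => by ring

theorem eventually_cmp_partialReturn_add_smul {S A : Type} [Finite S] [Finite A]
    (r d : S → A → S → ℝ) (γ : ℝ) (n : ℕ) :
    ∀ᶠ x in 𝓝[>] (0 : ℝ), ∀ σ τ : Segment S A n,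
      cmp (partialReturn (r + x • d) γ σ) (partialReturn (r + x • d) γ τ) =
        (cmp (partialReturn r γ σ) (partialReturn r γ τ)).then
          (cmp (partialReturn d γ σ) (partialReturn d γ τ)) := by
  simp only [eventually_all, partialReturn_add_smul]
  exact fun σ τ => eventually_cmp_add_mul _ _ _ _

theorem exists_lt_samePreferences_add_smul {S A : Type} [Finite S] [Finite A]
    (r d : S → A → S → ℝ) (γ : ℝ) (n : ℕ) :
    ∃ x y : ℝ, 0 < x ∧ x < y ∧ SamePreferences γ n (r + x • d) (r + y • d) := by
  have hlex := eventually_cmp_partialReturn_add_smul r d γ n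
  obtain ⟨y, hy, hy_pos : 0 < y⟩ := (hlex.and self_mem_nhdsWithin).exists
  obtain ⟨x, hx, hx_pos, hxy⟩ := (hlex.and (Ioo_mem_nhdsGT hy_pos)).exists
  refine ⟨x, y, hx_pos, hxy, fun σ τ => ?_⟩
  have hcmp := (hx σ τ).trans (hy σ τ).symm
  exact ⟨lt_iff_lt_of_cmp_eq_cmp hcmp, eq_iff_eq_of_cmp_eq_cmp hcmp⟩

end Preferences

theorem mem_Pistar_iff {M : MDP S A} {r : S → A → S → ℝ} {γ : ℝ}
    (hbdd : ∀ s, BddAbove (Set.range fun π => Vpi M π r γ s)) {π : Policy S A} :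
    π ∈ Pistar M r γ ↔ ∀ s π', Vpi M π' r γ s ≤ Vpi M π r γ s := by
  have : Nonempty (Policy S A) := ⟨π⟩
  refine forall_congr' fun s => ⟨fun h π' => h ▸ le_ciSup (hbdd s) π', fun h => ?_⟩
  exact le_antisymm (le_ciSup (hbdd s) π) (ciSup_le h)

namespace Policy

theorem sum_mul_le {S A : Type} [Fintype A] (π : Policy S A) (s : S) {f : A → ℝ} {C : ℝ}
    (hf : ∀ a, f a ≤ C) : ∑ a, π.p s a * f a ≤ C :=
  (convex_Iic C).sum_mem (fun a _ => π.nonneg s a) (π.sum_one s) fun a _ => hf a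

/-- The deterministic policy that plays `a` in every state. -/
def const (S : Type) {A : Type} [Fintype A] [DecidableEq A] (a : A) : Policy S A where
  p _ := Pi.single a 1
  nonneg _ := (single_mem_stdSimplex ℝ a).1
  sum_one _ := (single_mem_stdSimplex ℝ a).2

theorem sum_const_mul {S A : Type} [Fintype A] [DecidableEq A] (a : A) (s : S) (f : A → ℝ) :
    ∑ b, (const S a).p s b * f b = f a := by
  simp [const, Pi.single_apply]

end Policy

section OneShot

variable {O : Type} [Fintype O] [DecidableEq O]

/-- The one-step decision problem in which action `a` draws an outcome from `q a`: the initial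
state is `none`, and the outcome `some o` is absorbing. -/
def oneShotMDP (q : A → stdSimplex ℝ O) : MDP (Option O) A where
  T
    | none, _, none => 0
    | none, a, some o => q a o
    | some o, _, s' => Pi.single (M := fun _ => ℝ) (some o) 1 s'
  T_nonneg
    | none, _, none => le_rfl
    | none, a, some o => (q a).2.1 o
    | some o, _, s' => (single_mem_stdSimplex ℝ (some o)).1 s'
  T_sum_one
    | none, a => by simp
    | some o, _ => (single_mem_stdSimplex ℝ (some o)).2

/-- The reward that pays `u a o` when action `a` in the initial state leads to outcome `o`, and
nothing afterwards. -/
def oneShotReward {A O : Type} (u : A → O → ℝ) : Option O → A → Option O → ℝ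
  | none, a, some o => u a o
  | _, _, _ => 0

theorem oneShotReward_add_smul {A O : Type} (u v : A → O → ℝ) (x : ℝ) :
    oneShotReward (u + x • v) = oneShotReward u + x • oneShotReward v := by
  funext s a s'
  cases s <;> cases s' <;> simp [oneShotReward]

variable (q : A → stdSimplex ℝ O) (u : A → O → ℝ) (π : Policy (Option O) A) (γ : ℝ)

theorem oneShotMDP_T_none_none (a : A) : (oneShotMDP q).T none a none = 0 := rfl

theorem oneShotMDP_T_none_some (a : A) (o : O) : (oneShotMDP q).T none a (some o) = q a o := rfl

theorem oneShotMDP_T_some (o : O) (a : A) (s' : Option O) :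
    (oneShotMDP q).T (some o) a s' = Pi.single (M := fun _ => ℝ) (some o) 1 s' := rfl

theorem expReward_oneShot_some (t : ℕ) (o : O) :
    expReward (oneShotMDP q) π (oneShotReward u) t (some o) = 0 := by
  induction t with
  | zero => simp [expReward, oneShotReward]
  | succ t ih => simp [expReward, oneShotMDP_T_some, Pi.single_apply, ih]

theorem expReward_oneShot_succ (t : ℕ) (s : Option O) :
    expReward (oneShotMDP q) π (oneShotReward u) (t + 1) s = 0 := by
  cases s with
  | none =>
    simp [expReward, Fintype.sum_option, oneShotMDP_T_none_none, expReward_oneShot_some]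
  | some o => exact expReward_oneShot_some q u π (t + 1) o

theorem Vpi_oneShot (s : Option O) :
    Vpi (oneShotMDP q) π (oneShotReward u) γ s =
      expReward (oneShotMDP q) π (oneShotReward u) 0 s := by
  rw [Vpi, tsum_eq_single 0, pow_zero, one_mul]
  rintro (_ | t) ht
  · exact absurd rfl ht
  · rw [expReward_oneShot_succ, mul_zero]

theorem Vpi_oneShot_some (o : O) : Vpi (oneShotMDP q) π (oneShotReward u) γ (some o) = 0 := by
  rw [Vpi_oneShot, expReward_oneShot_some]

theorem Vpi_oneShot_none :
    Vpi (oneShotMDP q) π (oneShotReward u) γ none = ∑ a, π.p none a * ∑ o, q a o * u a o := by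
  simp [Vpi_oneShot, expReward, oneShotReward, Fintype.sum_option, oneShotMDP_T_none_some,
    Finset.mul_sum, mul_assoc]

theorem bddAbove_range_Vpi_oneShot (s : Option O) :
    BddAbove (Set.range fun π => Vpi (oneShotMDP q) π (oneShotReward u) γ s) := by
  cases s with
  | none =>
    obtain ⟨C, hC⟩ := (Set.finite_range fun a => ∑ o, q a o * u a o).bddAbove
    refine ⟨C, ?_⟩
    rintro _ ⟨π, rfl⟩
    simp only [Vpi_oneShot_none]
    exact π.sum_mul_le none fun a => hC ⟨a, rfl⟩
  | some o =>
    simp only [Vpi_oneShot_some]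
    exact ⟨0, by rintro _ ⟨_, rfl⟩; rfl⟩

theorem const_mem_Pistar_oneShot_iff [DecidableEq A] (a : A) :
    Policy.const (Option O) a ∈ Pistar (oneShotMDP q) (oneShotReward u) γ ↔
      ∀ b, ∑ o, q b o * u b o ≤ ∑ o, q a o * u a o := by
  simp only [mem_Pistar_iff (bddAbove_range_Vpi_oneShot q u γ), Option.forall, Vpi_oneShot_some,
    Vpi_oneShot_none, Policy.sum_const_mul, le_refl, implies_true, and_true]
  refine ⟨fun h b => ?_, fun h π => π.sum_mul_le none h⟩
  simpa only [Policy.sum_const_mul] using h (Policy.const (Option O) b)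

end OneShot

section Gamble

/-- The distribution on `Bool` giving `true` probability `p`. -/
def coin (p : unitInterval) : stdSimplex ℝ Bool :=
  ⟨fun o => if o then p else 1 - p, by
    simp [stdSimplex, unitInterval.nonneg, unitInterval.le_one]⟩

theorem coin_true (p : unitInterval) : coin p true = p := rfl

theorem coin_false (p : unitInterval) : coin p false = 1 - (p : ℝ) := rfl

/-- The payoffs of a choice between a sure payment of `1` (action `false`) and a gamble (action
`true`) that pays the prize `w` on the outcome `true` and nothing on `false`. -/
def gamblePayoff (w : ℝ) : Bool → Bool → ℝ
  | false, _ => 1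
  | true, o => if o then w else 0

/-- The derivative of `gamblePayoff` with respect to the prize. -/
def gambleWin : Bool → Bool → ℝ := fun a o => if a && o then 1 else 0

theorem gamblePayoff_add (w x : ℝ) : gamblePayoff (w + x) = gamblePayoff w + x • gambleWin := by
  funext a o
  cases a <;> cases o <;> simp [gamblePayoff, gambleWin]

theorem const_safe_mem_Pistar_gamble_iff (p : unitInterval) (w γ : ℝ) :
    Policy.const (Option Bool) false ∈
        Pistar (oneShotMDP fun _ : Bool => coin p) (oneShotReward (gamblePayoff w)) γ ↔
      p * w ≤ 1 := by
  simp [const_mem_Pistar_oneShot_iff, coin_true, coin_false, gamblePayoff]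

end Gamble

theorem exists_unitInterval_mul_lt_one_lt_mul {v w : ℝ} (hv : 1 ≤ v) (hvw : v < w) :
    ∃ p : unitInterval, p * v < 1 ∧ 1 < p * w := by
  have hv_pos : 0 < v := one_pos.trans_le hv
  obtain ⟨p, hp_gt, hp_lt⟩ := exists_between (one_div_lt_one_div_of_lt hv_pos hvw)
  have hp_pos : 0 < p := (one_div_pos.2 (hv_pos.trans hvw)).trans hp_gt
  have hp_le : p ≤ 1 := hp_lt.le.trans ((div_le_one hv_pos).2 hv)
  exact ⟨⟨p, hp_pos.le, hp_le⟩, (lt_div_iff₀ hv_pos).1 hp_lt,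
    (div_lt_iff₀ (hv_pos.trans hvw)).1 hp_gt⟩

theorem noiseless_partial_return_not_identifiable_general (γ : ℝ) (n : ℕ) :
    ∃ (M : MDP (Option Bool) Bool) (r rh : Option Bool → Bool → Option Bool → ℝ),
      SamePreferences γ n r rh ∧ Pistar M r γ ≠ Pistar M rh γ := by
  obtain ⟨x, y, hx, hxy, hpref⟩ := exists_lt_samePreferences_add_smul
    (oneShotReward (gamblePayoff 1)) (oneShotReward gambleWin) γ n
  simp only [← oneShotReward_add_smul, ← gamblePayoff_add] at hpref
  obtain ⟨p, hp_safe, hp_risky⟩ :=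
    exists_unitInterval_mul_lt_one_lt_mul (v := 1 + x) (w := 1 + y) (by linarith) (by linarith)
  refine ⟨oneShotMDP fun _ => coin p, _, _, hpref, fun hopt => hp_risky.not_ge ?_⟩
  rw [← const_safe_mem_Pistar_gamble_iff p (1 + y) γ, ← hopt]
  exact (const_safe_mem_Pistar_gamble_iff p (1 + x) γ).2 hp_safe.le

/-- **Noiseless partial return is not identifiable.**  Under the noiseless partial return
preference model (prefer the segment with strictly greater partial return, indifference on
ties), there exists a finite MDP with ground-truth reward `r` and a second reward function
`r̂`, and a fixed segment length `n`, such that `r` and `r̂` induce exactly the same noiseless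
partial-return preference relation over all pairs of length-`n` segments, yet their sets of
optimal policies differ. -/
theorem noiseless_partial_return_not_identifiable :
    ∃ (S A : Type) (iS : Fintype S) (iA : Fintype A) (_ : Nonempty S) (_ : Nonempty A)
      (M : @MDP S A iS iA) (r rh : S → A → S → ℝ) (γ : ℝ) (n : ℕ),
      0 < n ∧ γ ∈ Set.Icc (0 : ℝ) 1 ∧
      (∀ σ1 σ2 : Segment S A n,
        (partialReturn r γ σ1 < partialReturn r γ σ2 ↔
          partialReturn rh γ σ1 < partialReturn rh γ σ2) ∧
        (partialReturn r γ σ1 = partialReturn r γ σ2 ↔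
          partialReturn rh γ σ1 = partialReturn rh γ σ2)) ∧
      @Pistar S A iS iA M r γ ≠ @Pistar S A iS iA M rh γ := by
  obtain ⟨M, r, rh, hpref, hopt⟩ := noiseless_partial_return_not_identifiable_general 1 1
  exact ⟨_, _, _, _, inferInstance, inferInstance, M, r, rh, 1, 1, one_pos, by simp, hpref, hopt⟩
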